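/- Let p be a prime with p ≡ 1 (mod 4). Then ∑_{0<n<p/4} χ_p(n) = (√p/π)·L(1, χ_{4p}), where the sum runs over all integers n with 0 < n < p/4 (an identity in ℂ after casting the integer left-hand side; both sides are in fact real). -/

import Mathlib

section QE1
open Filter Topology


lemma qe_parts (a u : ℕ → ℂ) (n : ℕ) :
    ∑ k ∈ Finset.range n, a k * u k = (∑ k ∈ Finset.range n, a k) * u n +
      ∑ k ∈ Finset.range n, (∑ j ∈ Finset.range (k+1), a j) * (u k - u (k+1)) := by
  induction n with
  | zero => simp
  | succ n ih =>
    rw [Finset.sum_range_succ, ih, Finset.sum_range_succ (fun k => (∑ j ∈ Finset.range (k+1), a j) * (u k - u (k+1))), Finset.sum_range_succ a]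
    ring

lemma qe_bound (k : ℕ) (s : ℝ) (h1 : 1 ≤ s) (h2 : s ≤ 2) :
    |((k:ℝ)+1)^(-s) - ((k:ℝ)+1+1)^(-s)| ≤ 2 / ((k:ℝ)+1)^2 := by
  have hk : (0:ℝ) < (k:ℝ)+1 := by positivity
  have hk2 : (0:ℝ) < (k:ℝ)+1+1 := by positivity
  set x : ℝ := ((k:ℝ)+1)/((k:ℝ)+1+1) with hx
  have hx0 : 0 < x := by positivity
  have hx1 : x ≤ 1 := by rw [hx, div_le_one hk2]; linarith
  have e : ((k:ℝ)+1)^(-s) - ((k:ℝ)+1+1)^(-s) = ((k:ℝ)+1)^(-s) * (1 - x^s) := by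
    rw [hx, Real.div_rpow hk.le hk2.le, Real.rpow_neg hk.le, Real.rpow_neg hk2.le]
    have := (Real.rpow_pos_of_pos hk s).ne'
    have := (Real.rpow_pos_of_pos hk2 s).ne'
    field_simp
  have hxs : x^s ≤ 1 := Real.rpow_le_one hx0.le hx1 (by linarith)
  have hxs2 : x^2 ≤ x^s := by
    rw [← Real.rpow_two]; exact Real.rpow_le_rpow_of_exponent_ge hx0 hx1 h2
  have hu0 : 0 < ((k:ℝ)+1)^(-s) := Real.rpow_pos_of_pos hk _
  have hu : ((k:ℝ)+1)^(-s) ≤ 1/((k:ℝ)+1) := by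
    rw [one_div, ← Real.rpow_neg_one]
    exact Real.rpow_le_rpow_of_exponent_le (by linarith) (by linarith)
  rw [e, abs_of_nonneg (mul_nonneg hu0.le (by linarith))]
  have h3 : 1 - x^s ≤ 2 / ((k:ℝ)+1) := by
    have : 1 - x = 1 / ((k:ℝ)+1+1) := by rw [hx]; field_simp; ring
    have h4 : 1 / ((k:ℝ)+1+1) ≤ 1 / ((k:ℝ)+1) := one_div_le_one_div_of_le hk (by linarith)
    have : 2 / ((k:ℝ)+1) = 2 * (1/((k:ℝ)+1)) := by ring
    nlinarith
  calc _ ≤ 1/((k:ℝ)+1) * (2 / ((k:ℝ)+1)) := mul_le_mul hu h3 (by linarith) (by positivity)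
    _ = _ := by field_simp

lemma qe_tendsto_parts (a : ℕ → ℂ) (C : ℝ) (hC : ∀ n, ‖∑ k ∈ Finset.range n, a k‖ ≤ C)
    (s : ℝ) (h1 : 1 ≤ s) (h2 : s ≤ 2) :
    Tendsto (fun n => ∑ k ∈ Finset.range n, a k * (((((k:ℝ)+1)^(-s) : ℝ)) : ℂ)) atTop
      (𝓝 (∑' k : ℕ, (∑ j ∈ Finset.range (k+1), a j) *
        ((((k:ℝ)+1)^(-s) - ((k:ℝ)+1+1)^(-s) : ℝ) : ℂ))) := by
  have hsum : Summable (fun k : ℕ => (2 / ((k:ℝ)+1)^2)) := by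
    have := (summable_nat_add_iff 1).2 (Real.summable_one_div_nat_pow (p := 2) |>.2 (by norm_num))
    refine (this.mul_left 2).congr fun k => ?_
    push_cast; ring
  have hS : Summable (fun k : ℕ => (∑ j ∈ Finset.range (k+1), a j) *
        ((((k:ℝ)+1)^(-s) - ((k:ℝ)+1+1)^(-s) : ℝ) : ℂ)) := by
    refine Summable.of_norm_bounded (hsum.mul_left C) fun k => ?_
    rw [norm_mul, Complex.norm_real, Real.norm_eq_abs]
    exact mul_le_mul (hC _) (qe_bound k s h1 h2) (abs_nonneg _) ((norm_nonneg _).trans (hC 0))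
  have h0 : Tendsto (fun n : ℕ => ((((n:ℝ)+1)^(-s) : ℝ))) atTop (𝓝 0) := by
    have := tendsto_rpow_neg_atTop (y := s) (by linarith)
    exact this.comp (tendsto_atTop_add_const_right _ _ tendsto_natCast_atTop_atTop)
  have h0' : Tendsto (fun n : ℕ => (∑ k ∈ Finset.range n, a k) * (((((n:ℝ)+1)^(-s) : ℝ)) : ℂ)) atTop (𝓝 0) := by
    refine squeeze_zero_norm (a := fun n : ℕ => C * ((n:ℝ)+1)^(-s)) (fun n => ?_) (by simpa using h0.const_mul C)
    rw [norm_mul, Complex.norm_real, Real.norm_eq_abs, abs_of_nonneg (by positivity)]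
    exact mul_le_mul_of_nonneg_right (hC _) (by positivity)
  have := h0'.add hS.hasSum.tendsto_sum_nat
  rw [zero_add] at this
  refine this.congr fun n => ?_
  rw [qe_parts a (fun k => ((((k:ℝ)+1)^(-s) : ℝ) : ℂ)) n]
  simp

lemma qe_bounded {N : ℕ} [NeZero N] (χ : DirichletCharacter ℂ N) (hχ : χ ≠ 1) :
    ∃ C, ∀ n, ‖∑ k ∈ Finset.range n, χ ((k+1 : ℕ) : ZMod N)‖ ≤ C := by
  have hper : Function.Periodic (fun n => ∑ k ∈ Finset.range n, χ ((k+1 : ℕ) : ZMod N)) N := by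
    intro n
    simp only
    rw [Finset.sum_range_add]
    have : ∑ x ∈ Finset.range N, χ ((n + x + 1 : ℕ) : ZMod N) = 0 := by
      have h0 : ∑ x : ZMod N, χ x = 0 := MulChar.sum_eq_zero_of_ne_one hχ
      rw [← h0, ← Fintype.sum_equiv (Equiv.addLeft ((n+1 : ℕ) : ZMod N)) (fun x => χ ((n+1 : ℕ) + x)) _ (fun x => rfl)]
      symm
      refine Finset.sum_bij' (fun x _ => x.val) (fun k _ => (k : ZMod N)) ?_ ?_ ?_ ?_ ?_
      · intro x _; simpa using ZMod.val_lt x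
      · simp
      · simp
      · intro k hk; exact ZMod.val_cast_of_lt (by simpa using hk)
      · intro x _
        congr 1
        push_cast
        simp; ring
    rw [this, add_zero]
  refine ⟨∑ m ∈ Finset.range N, ‖∑ k ∈ Finset.range m, χ ((k+1 : ℕ) : ZMod N)‖, fun n => ?_⟩
  have := hper.map_mod_nat n
  rw [← this]
  exact Finset.single_le_sum (f := fun m => ‖∑ k ∈ Finset.range m, χ ((k+1 : ℕ) : ZMod N)‖) (fun _ _ => norm_nonneg _) (Finset.mem_range.2 (Nat.mod_lt _ (NeZero.pos N)))

lemma qe_L_one {N : ℕ} [NeZero N] (χ : DirichletCharacter ℂ N) (hχ : χ ≠ 1) :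
    Tendsto (fun n => ∑ k ∈ Finset.range n, χ ((k+1 : ℕ) : ZMod N) / ((k:ℂ)+1)) atTop
      (𝓝 (DirichletCharacter.LFunction χ 1)) := by
  obtain ⟨C, hC⟩ := qe_bounded χ hχ
  set a : ℕ → ℂ := fun k => χ ((k+1 : ℕ) : ZMod N) with ha
  set D : ℝ → ℂ := fun s => (∑' k : ℕ, (∑ j ∈ Finset.range (k+1), a j) *
        ((((k:ℝ)+1)^(-s) - ((k:ℝ)+1+1)^(-s) : ℝ) : ℂ)) with hD
  have key := qe_tendsto_parts a C hC
  have hsum : Summable (fun k : ℕ => (2 / ((k:ℝ)+1)^2)) := by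
    have := (summable_nat_add_iff 1).2 (Real.summable_one_div_nat_pow (p := 2) |>.2 (by norm_num))
    refine (this.mul_left 2).congr fun k => ?_
    push_cast; ring
  have hmem : ∀ᶠ s : ℝ in 𝓝[>] 1, s ∈ Set.Ioo (1:ℝ) 2 := Ioo_mem_nhdsGT (by norm_num)
  have hDlim : Tendsto D (𝓝[>] 1) (𝓝 (D 1)) := by
    refine tendsto_tsum_of_dominated_convergence (hsum.mul_left C) (fun k => ?_) ?_
    · refine tendsto_nhdsWithin_of_tendsto_nhds ?_
      refine ContinuousAt.tendsto (x := (1:ℝ)) ?_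
      have hk : (0:ℝ) < (k:ℝ)+1 := by positivity
      have hk2 : (0:ℝ) < (k:ℝ)+1+1 := by positivity
      refine continuousAt_const.mul (Complex.continuous_ofReal.continuousAt.comp ?_)
      exact ((Real.continuousAt_const_rpow hk.ne').comp continuousAt_neg).sub ((Real.continuousAt_const_rpow hk2.ne').comp continuousAt_neg)
    · filter_upwards [hmem] with s hs k
      rw [norm_mul, Complex.norm_real, Real.norm_eq_abs]
      exact mul_le_mul (hC _) (qe_bound k s hs.1.le hs.2.le) (abs_nonneg _) ((norm_nonneg _).trans (hC 0))
  have hLD : ∀ s : ℝ, s ∈ Set.Ioo (1:ℝ) 2 → DirichletCharacter.LFunction χ s = D s := by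
    intro s hs
    have hre : 1 < ((s:ℂ)).re := by simpa using hs.1
    rw [DirichletCharacter.LFunction_eq_LSeries χ hre]
    have hsm := DirichletCharacter.LSeriesSummable_of_one_lt_re χ hre
    have h1 := ((hasSum_nat_add_iff' 1).2 hsm.LSeriesHasSum).tendsto_sum_nat
    simp only [Finset.range_one, Finset.sum_singleton, LSeries.term_zero, sub_zero] at h1
    refine tendsto_nhds_unique (h1.congr fun n => ?_) (key s hs.1.le hs.2.le)
    refine Finset.sum_congr rfl fun k _ => ?_
    rw [LSeries.term_of_ne_zero (by omega), Complex.ofReal_cpow (by positivity)]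
    push_cast
    rw [Complex.cpow_neg, div_eq_mul_inv]
    simp [ha]
  have hL : Tendsto (fun s : ℝ => DirichletCharacter.LFunction χ s) (𝓝[>] 1) (𝓝 (DirichletCharacter.LFunction χ 1)) := by
    have := (DirichletCharacter.differentiable_LFunction hχ).continuous.comp Complex.continuous_ofReal
    have := (this.tendsto 1).mono_left (nhdsWithin_le_nhds (s := Set.Ioi 1))
    simpa [Function.comp_def] using this
  have hfin : DirichletCharacter.LFunction χ 1 = D 1 := by
    refine tendsto_nhds_unique hL (hDlim.congr' ?_)
    filter_upwards [hmem] with s hs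
    exact (hLD s hs).symm
  rw [hfin]
  refine (key 1 le_rfl (by norm_num)).congr fun n => ?_
  refine Finset.sum_congr rfl fun k _ => ?_
  rw [Real.rpow_neg_one, div_eq_mul_inv]
  simp [ha]

end QE1

section QE2
open Polynomial


lemma qe_sum_choose (p m : ℕ) [Fact p.Prime] (hm : p = 2*m+1) :
    (m.factorial : ZMod p) * ∑ j ∈ Finset.range p, ((legendreSym p (j:ℤ) : ℤ) : ZMod p) * (j.choose m : ZMod p) = -1 := by
  have h1 : (m.factorial : ZMod p) * ∑ j ∈ Finset.range p, ((legendreSym p (j:ℤ) : ℤ) : ZMod p) * (j.choose m : ZMod p)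
      = ∑ x : ZMod p, (X^m * descPochhammer (ZMod p) m).eval x := by
    rw [Finset.mul_sum]
    symm
    refine Finset.sum_bij' (fun x _ => x.val) (fun k _ => (k : ZMod p)) ?_ ?_ ?_ ?_ ?_
    · intro x _; simpa using ZMod.val_lt x
    · simp
    · simp
    · intro k hk; exact ZMod.val_cast_of_lt (by simpa using hk)
    · intro x _
      have hx : ((x.val : ℕ) : ZMod p) = x := by simp
      rw [legendreSym.eq_pow, show p/2 = m by omega, Int.cast_natCast]
      conv_lhs => rw [← hx]
      rw [eval_mul, eval_pow, eval_X, descPochhammer_eval_eq_descFactorial, Nat.descFactorial_eq_factorial_mul_choose]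
      push_cast
      ring
  have hmon : (X^m * descPochhammer (ZMod p) m).Monic := (monic_X_pow m).mul (monic_descPochhammer _ m)
  have hdeg : (X^m * descPochhammer (ZMod p) m).natDegree = 2*m := by
    rw [(monic_X_pow m).natDegree_mul (monic_descPochhammer _ m), descPochhammer_natDegree, natDegree_X_pow]; ring
  rw [h1]
  simp_rw [eval_eq_sum_range, hdeg]
  rw [Finset.sum_comm, Finset.sum_range_succ, Finset.sum_eq_zero]
  · rw [← Finset.mul_sum, ← hdeg, hmon.coeff_natDegree, hdeg, zero_add, one_mul]
    have hq : 2 * m = p - 1 := by omega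
    have hm0 : p - 1 ≠ 0 := by have := (Fact.out : p.Prime).two_le; omega
    rw [hq, ← Finset.add_sum_erase _ _ (Finset.mem_univ (0:ZMod p)), zero_pow hm0, zero_add,
      Finset.sum_congr rfl (g := fun _ => (1 : ZMod p)) (fun x hx => ZMod.pow_card_sub_one_eq_one (Finset.ne_of_mem_erase hx))]
    simp [Finset.card_erase_of_mem, ZMod.card, Nat.cast_sub (Fact.out : p.Prime).one_le]
  · intro i hi
    rw [← Finset.mul_sum, FiniteField.sum_pow_lt_card_sub_one, mul_zero]
    rw [ZMod.card]
    have := Finset.mem_range.1 hi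
    omega

lemma qe_factor {R : Type*} [CommRing R] (a b : ℕ) :
    ∃ Q : R[X], (X+1)^a - (X+1)^b = X * Q ∧ Q.coeff 0 = (a:R) - b := by
  refine ⟨((X+1)^a - (X+1)^b : R[X]).divX, ?_, ?_⟩
  · conv_lhs => rw [← X_mul_divX_add ((X+1)^a - (X+1)^b : R[X])]
    simp [coeff_X_add_one_pow]
  · simp [coeff_divX, coeff_X_add_one_pow]

lemma qe_coeff_prod {R : Type*} [CommRing R] (m : ℕ) (a b : ℕ → ℕ) :
    (∏ k ∈ Finset.range m, ((X+1)^(a k) - (X+1)^(b k) : R[X])).coeff m =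
      ∏ k ∈ Finset.range m, ((a k : R) - b k) := by
  choose Q hQ hQ0 using fun k => qe_factor (R := R) (a k) (b k)
  simp_rw [hQ, Finset.prod_mul_distrib, Finset.prod_const, Finset.card_range]
  rw [coeff_X_pow_mul', if_pos le_rfl, Nat.sub_self, coeff_zero_prod]
  simp_rw [hQ0]

lemma qe_fact_sq (p m : ℕ) [Fact p.Prime] (hm : p = 2*m+1) (hme : Even m) :
    (m.factorial : ZMod p)^2 = -1 := by
  rw [← ZMod.wilsons_lemma p, show p - 1 = m + m by omega, ← Finset.prod_range_add_one_eq_factorial,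
    ← Finset.prod_range_add_one_eq_factorial, Finset.prod_range_add, sq]
  push_cast
  congr 1
  rw [← Finset.prod_range_reflect (fun x => ((m:ZMod p) + x + 1))]
  have hone : ∏ x ∈ Finset.range m, (-1 : ZMod p) = 1 := by
    rw [Finset.prod_const, Finset.card_range, hme.neg_one_pow]
  have hneg : ∏ x ∈ Finset.range m, ((x:ZMod p)+1) = ∏ x ∈ Finset.range m, (-1 * ((x:ZMod p)+1)) := by
    rw [Finset.prod_mul_distrib, hone, one_mul]
  rw [hneg]
  refine Finset.prod_congr rfl fun x hx => ?_
  have := Finset.mem_range.1 hx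
  have hp0 : ((2*m+1 : ℕ) : ZMod p) = 0 := by rw [← hm]; simp
  have h2 : ((m - 1 - x : ℕ) : ZMod p) = m - 1 - x := by
    rw [Nat.cast_sub (by omega), Nat.cast_sub (by omega)]; simp
  rw [h2]
  push_cast at hp0
  linear_combination -hp0

lemma qe_two_pow (p t : ℕ) [Fact p.Prime] (ht : p = 2*(2*t)+1) :
    (2 : ZMod p)^(2*t) = (-1)^t := by
  have h := legendreSym.eq_pow p 2
  rw [legendreSym.at_two (by omega), show p/2 = 2*t by omega] at h
  push_cast at h
  rw [← h, ZMod.χ₈_nat_eq_if_mod_eight]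
  rcases Nat.even_or_odd t with h' | h'
  · rw [h'.neg_one_pow]; obtain ⟨r, rfl⟩ := h'
    rw [if_neg (by omega), if_pos (by omega)]; simp
  · rw [h'.neg_one_pow]; obtain ⟨r, rfl⟩ := h'
    rw [if_neg (by omega), if_neg (by omega)]; simp

lemma qe_sign (p t : ℕ) [Fact p.Prime] (ht : p = 2*(2*t)+1) (ζ : ℂ) (hζ : IsPrimitiveRoot ζ p) (δ : ℤ)
    (h : ∑ j ∈ Finset.range p, (legendreSym p (j:ℤ) : ℂ) * ζ^j
      = δ * ∏ k ∈ Finset.range (2*t), (ζ^(k+1) - ζ^(p-(k+1)))) : (δ : ZMod p) = (-1)^t := by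
  have hpr : p.Prime := Fact.out
  set f : ℤ[X] := ∑ j ∈ Finset.range p, C (legendreSym p (j:ℤ)) * X^j -
    C δ * ∏ k ∈ Finset.range (2*t), (X^(k+1) - X^(p-(k+1))) with hf
  have h0 : aeval ζ f = 0 := by
    simp only [hf, map_sub, map_sum, map_mul, map_pow, aeval_X, map_prod, aeval_C, sub_eq_zero]
    simpa using h
  have hdvd : cyclotomic p ℤ ∣ f := by
    rw [cyclotomic_eq_minpoly hζ hpr.pos]
    exact minpoly.isIntegrallyClosed_dvd (hζ.isIntegral hpr.pos) h0
  have hcyc : (cyclotomic p ℤ).map (Int.castRingHom (ZMod p)) = (X - 1)^(p-1) := by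
    have := cyclotomic_mul_prime_eq_pow_of_not_dvd (ZMod p) (p := p) (n := 1) hpr.not_dvd_one
    rw [map_cyclotomic]
    simpa using this
  obtain ⟨q, hq⟩ := hdvd
  have h1 : ((f.map (Int.castRingHom (ZMod p))).comp (X+1)).coeff (2*t) = 0 := by
    rw [hq, Polynomial.map_mul, hcyc, mul_comp, pow_comp]
    simp only [sub_comp, X_comp, one_comp, add_sub_cancel_right]
    rw [coeff_X_pow_mul', if_neg]
    have := hpr.two_le
    omega
  have h2 : (f.map (Int.castRingHom (ZMod p))).comp (X+1) =
      ∑ j ∈ Finset.range p, C ((legendreSym p (j:ℤ) : ℤ) : ZMod p) * (X+1)^j -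
    C (δ : ZMod p) * ∏ k ∈ Finset.range (2*t), ((X+1)^(k+1) - (X+1)^(p-(k+1))) := by
    simp [hf, Polynomial.map_sum, Polynomial.map_prod, sum_comp, prod_comp]
  rw [h2, coeff_sub, finsetSum_coeff, coeff_C_mul, qe_coeff_prod, sub_eq_zero] at h1
  simp only [coeff_C_mul, coeff_X_add_one_pow] at h1
  have h3 := qe_sum_choose p (2*t) ht
  rw [h1] at h3
  have h4 : ∏ k ∈ Finset.range (2*t), (((k+1 : ℕ) : ZMod p) - ((p-(k+1) : ℕ) : ZMod p)) = 2^(2*t) * ((2*t).factorial : ZMod p) := by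
    rw [← Finset.prod_range_add_one_eq_factorial]
    push_cast
    nth_rewrite 2 [← Finset.card_range (2*t)]
    rw [← Finset.prod_const, ← Finset.prod_mul_distrib]
    refine Finset.prod_congr rfl fun k hk => ?_
    have := Finset.mem_range.1 hk
    rw [Nat.cast_sub (by omega)]
    push_cast
    simp; ring
  rw [h4, qe_two_pow p t ht] at h3
  have h5 := qe_fact_sq p (2*t) ht (by simp)
  have h6 : ((-1 : ZMod p)^t)^2 = 1 := by rw [← pow_mul, mul_comm, pow_mul]; simp
  have h7 : (δ : ZMod p) * (-1)^t = 1 := by linear_combination (-1) * h3 + (δ : ZMod p) * (-1)^t * h5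
  linear_combination (-1)^t * h7 - δ * h6

lemma qe_zeta_pow (p : ℕ) (hp : p ≠ 0) (k : ℕ) :
    (Complex.exp (2 * Real.pi * Complex.I / p))^k =
      (Real.cos (2 * Real.pi * k / p) : ℂ) + (Real.sin (2 * Real.pi * k / p) : ℂ) * Complex.I := by
  rw [← Complex.exp_nat_mul, Complex.ofReal_cos, Complex.ofReal_sin, ← Complex.exp_mul_I]
  congr 1
  push_cast
  ring

lemma qe_zeta_pow_sub (p : ℕ) (hp : p ≠ 0) (k : ℕ) (hk : k ≤ p) :
    (Complex.exp (2 * Real.pi * Complex.I / p))^k - (Complex.exp (2 * Real.pi * Complex.I / p))^(p-k) =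
      Complex.I * ((2 * Real.sin (2 * Real.pi * k / p) : ℝ) : ℂ) := by
  have hp' : (p:ℝ) ≠ 0 := by exact_mod_cast hp
  rw [qe_zeta_pow p hp, qe_zeta_pow p hp]
  have : 2 * Real.pi * ((p-k : ℕ) : ℝ) / p = 2 * Real.pi - 2 * Real.pi * k / p := by
    rw [Nat.cast_sub hk]; field_simp
  rw [this, Real.cos_two_pi_sub, Real.sin_two_pi_sub]
  push_cast
  ring

lemma qe_norm_one_sub (p : ℕ) (hp : p ≠ 0) (k : ℕ) :
    ‖1 - ((Complex.exp (2 * Real.pi * Complex.I / p))^2)^k‖ = |2 * Real.sin (2 * Real.pi * k / p)| := by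
  rw [← pow_mul, mul_comm 2 k, pow_mul, qe_zeta_pow p hp]
  set x := 2 * Real.pi * k / p
  have h : (1 : ℂ) - ((Real.cos x : ℂ) + (Real.sin x : ℂ) * Complex.I)^2 =
     ((Real.cos x : ℂ) + (Real.sin x : ℂ) * Complex.I) * (-Complex.I) * ((2 * Real.sin x : ℝ) : ℂ) := by
    have h1 : (Real.cos x : ℂ)^2 + (Real.sin x : ℂ)^2 = 1 := by
      exact_mod_cast Real.cos_sq_add_sin_sq x
    push_cast at h1 ⊢
    linear_combination (-1) * h1 + (Complex.sin x ^2 ) * Complex.I_sq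
  rw [h, norm_mul, norm_mul, Complex.ofReal_cos, Complex.ofReal_sin, ← Complex.exp_mul_I, Complex.norm_exp_ofReal_mul_I]
  simp
  rw [← Complex.ofReal_sin, Complex.norm_real, Real.norm_eq_abs]

lemma qe_sin_prod (p m : ℕ) (hp : p.Prime) (hm : p = 2*m+1) :
    0 < ∏ k ∈ Finset.range m, (2 * Real.sin (2 * Real.pi * (k+1 : ℕ) / p)) ∧
    (∏ k ∈ Finset.range m, (2 * Real.sin (2 * Real.pi * (k+1 : ℕ) / p)))^2 = p := by
  have hp0 : (0:ℝ) < p := by exact_mod_cast hp.pos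
  have hpos : ∀ k ∈ Finset.range m, 0 < 2 * Real.sin (2 * Real.pi * (k+1 : ℕ) / p) := by
    intro k hk
    have hk' := Finset.mem_range.1 hk
    refine mul_pos two_pos (Real.sin_pos_of_pos_of_lt_pi ?_ ?_)
    · have := Real.pi_pos
      positivity
    · rw [div_lt_iff₀ hp0]
      have : (2 * ((k+1 : ℕ) : ℝ)) < p := by exact_mod_cast (by omega : 2 * (k+1) < p)
      nlinarith [Real.pi_pos]
  refine ⟨Finset.prod_pos hpos, ?_⟩
  have hζ := Complex.isPrimitiveRoot_exp p hp.ne_zero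
  have hμ : IsPrimitiveRoot ((Complex.exp (2 * Real.pi * Complex.I / p))^2) (2*m+1) := by
    rw [← hm]
    refine hζ.pow_of_coprime 2 ?_
    rw [Nat.coprime_two_left, hm]; exact ⟨m, rfl⟩
  have h := congrArg norm hμ.prod_one_sub_pow_eq_order
  rw [norm_prod] at h
  simp_rw [qe_norm_one_sub p hp.ne_zero] at h
  have hr : ‖(((2*m : ℕ) : ℂ) + 1)‖ = (p : ℝ) := by
    have : (((2*m : ℕ) : ℂ) + 1) = ((p : ℕ) : ℂ) := by rw [hm]; push_cast; ring
    rw [this, Complex.norm_natCast]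
  rw [hr, two_mul, Finset.prod_range_add] at h
  refine Eq.trans ?_ h
  rw [sq]
  congr 1
  · exact Finset.prod_congr rfl fun k hk => (abs_of_pos (hpos k hk)).symm
  · rw [← Finset.prod_range_reflect (fun x => |2 * Real.sin (2 * Real.pi * (m + x + 1 : ℕ) / p)|)]
    refine Finset.prod_congr rfl fun k hk => ?_
    have hk' := Finset.mem_range.1 hk
    rw [← abs_of_pos (hpos k hk)]
    have : 2 * Real.pi * ((m + (m - 1 - k) + 1 : ℕ) : ℝ) / p = 2 * Real.pi - 2 * Real.pi * (k+1 : ℕ) / p := by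
      rw [show m + (m-1-k) + 1 = p - (k+1) by omega, Nat.cast_sub (by omega)]
      field_simp
    rw [this, Real.sin_two_pi_sub]
    simp

lemma qe_sum_zmod {M : Type*} [AddCommMonoid M] (p : ℕ) [NeZero p] (g : ZMod p → M) :
    ∑ x : ZMod p, g x = ∑ j ∈ Finset.range p, g (j : ZMod p) := by
  refine Finset.sum_bij' (fun x _ => x.val) (fun k _ => (k : ZMod p)) ?_ ?_ ?_ ?_ ?_
  · intro x _; simpa using ZMod.val_lt x
  · simp
  · simp
  · intro k hk; exact ZMod.val_cast_of_lt (by simpa using hk)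
  · intro x _; simp

lemma qe_stdAddChar (p : ℕ) [NeZero p] (j : ℕ) :
    ZMod.stdAddChar (j : ZMod p) = (Complex.exp (2 * Real.pi * Complex.I / p))^j := by
  have := ZMod.stdAddChar_coe (N := p) (j : ℤ)
  rw [Int.cast_natCast] at this
  rw [this, ← Complex.exp_nat_mul]
  congr 1
  push_cast
  ring

noncomputable def qeChar (p : ℕ) [Fact p.Prime] : MulChar (ZMod p) ℂ :=
  (quadraticChar (ZMod p)).ringHomComp (Int.castRingHom ℂ)

lemma qeChar_natCast (p : ℕ) [Fact p.Prime] (j : ℕ) :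
    qeChar p (j : ZMod p) = (legendreSym p (j:ℤ) : ℂ) := by
  simp [qeChar, legendreSym]

lemma qeChar_ne_one (p : ℕ) [Fact p.Prime] (h2 : p ≠ 2) : qeChar p ≠ 1 := by
  unfold qeChar
  rw [MulChar.ringHomComp_ne_one_iff (RingHom.injective_int _)]
  exact quadraticChar_ne_one (by rwa [ZMod.ringChar_zmod_n])

lemma qeChar_neg_one (p : ℕ) [Fact p.Prime] (h1 : p % 4 = 1) : qeChar p (-1) = 1 := by
  have := (ZMod.exists_sq_eq_neg_one_iff (p := p)).2 (by omega)
  have h := (quadraticChar_one_iff_isSquare (F := ZMod p) (a := -1) (by simp)).2 this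
  simp [qeChar, h]

lemma qeChar_quad (p : ℕ) [Fact p.Prime] : (qeChar p).IsQuadratic :=
  (quadraticChar_isQuadratic (ZMod p)).comp _

lemma qe_gauss (p : ℕ) [Fact p.Prime] (h1 : p % 4 = 1) :
    gaussSum (qeChar p) ZMod.stdAddChar = (Real.sqrt p : ℂ) := by
  have hpr : p.Prime := Fact.out
  obtain ⟨t, ht⟩ : ∃ t, p = 2*(2*t)+1 := ⟨p/4, by omega⟩
  have hsq : gaussSum (qeChar p) ZMod.stdAddChar ^ 2 = (Real.sqrt p : ℂ)^2 := by
    rw [gaussSum_sq (qeChar_ne_one p (by omega)) (qeChar_quad p) (ZMod.isPrimitive_stdAddChar p),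
      qeChar_neg_one p h1, ZMod.card, ← Complex.ofReal_pow, Real.sq_sqrt (by positivity)]
    simp
  rcases sq_eq_sq_iff_eq_or_eq_neg.1 hsq with h | h
  · exact h
  exfalso
  obtain ⟨hS0, hS⟩ := qe_sin_prod p (2*t) hpr ht
  have hSs : ∏ k ∈ Finset.range (2*t), (2 * Real.sin (2 * Real.pi * (k+1 : ℕ) / p)) = Real.sqrt p := by
    have h5 := Real.sqrt_sq hS0.le
    rw [hS] at h5
    exact h5.symm
  have hP : ∏ k ∈ Finset.range (2*t), ((Complex.exp (2 * Real.pi * Complex.I / p))^(k+1) - (Complex.exp (2 * Real.pi * Complex.I / p))^(p-(k+1))) = (-1)^t * (Real.sqrt p : ℂ) := by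
    rw [← hSs, Finset.prod_congr rfl (fun k hk => qe_zeta_pow_sub p hpr.ne_zero (k+1) (by have := Finset.mem_range.1 hk; omega)),
      Finset.prod_mul_distrib, Finset.prod_const, Finset.card_range, pow_mul, Complex.I_sq, Complex.ofReal_prod]
  have := qe_sign p t ht _ (Complex.isPrimitiveRoot_exp p hpr.ne_zero) (-(-1)^t) (by
    rw [hP]
    have h6 : ((-1 : ℂ)^t)^2 = 1 := by rw [← pow_mul, mul_comm, pow_mul]; simp
    have h7 : gaussSum (qeChar p) ZMod.stdAddChar = ∑ j ∈ Finset.range p, (legendreSym p (j:ℤ) : ℂ) * (Complex.exp (2 * Real.pi * Complex.I / p))^j := by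
      rw [gaussSum, qe_sum_zmod]
      simp_rw [qeChar_natCast, qe_stdAddChar]
    rw [← h7, h]
    push_cast
    linear_combination (Real.sqrt p : ℂ) * h6)
  push_cast at this
  have h8 : (2 : ZMod p) * (-1)^t = 0 := by linear_combination -this
  have h9 : (2 : ZMod p) ≠ 0 := by
    have : Fact (2 < p) := ⟨by have := hpr.two_le; omega⟩
    exact Ring.two_ne_zero (by rw [ZMod.ringChar_zmod_n]; omega)
  exact (mul_ne_zero h9 (pow_ne_zero _ (by simp))) h8

lemma qe_gauss_shift (p : ℕ) [Fact p.Prime] (h1 : p % 4 = 1) (x : ZMod p) :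
    ∑ a : ZMod p, qeChar p a * ZMod.stdAddChar (x * a) = qeChar p x * (Real.sqrt p : ℂ) := by
  by_cases hx : x = 0
  · subst hx
    simp [MulChar.sum_eq_zero_of_ne_one (qeChar_ne_one p (by omega))]
    left
    exact MulChar.map_nonunit _ (by simp)
  · have h := gaussSum_mulShift_eq (qeChar p) ZMod.stdAddChar (Units.mk0 x hx)
    rw [(qeChar_quad p).inv, qe_gauss p h1] at h
    simpa [gaussSum, AddChar.mulShift_apply] using h

end QE2

section QE3
open Filter Topology

lemma qe_arg_half (φ : ℝ) (h0 : 0 < φ) (h1 : φ < Real.pi) :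
    Complex.arg (1 - ((Real.cos (2*φ) : ℂ) + (Real.sin (2*φ) : ℂ) * Complex.I)) = φ - Real.pi/2 := by
  have hs : 0 < 2 * Real.sin φ := mul_pos two_pos (Real.sin_pos_of_pos_of_lt_pi h0 h1)
  have h := Complex.arg_mul_cos_add_sin_mul_I hs (θ := φ - Real.pi/2) ⟨by linarith, by linarith⟩
  rw [← h]
  congr 1
  rw [← Complex.ofReal_cos, ← Complex.ofReal_sin, Real.cos_sub_pi_div_two, Real.sin_sub_pi_div_two,
    Real.cos_two_mul, Real.sin_two_mul]
  have h2 : (Real.cos φ : ℂ)^2 + (Real.sin φ : ℂ)^2 = 1 := by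
    exact_mod_cast Real.cos_sq_add_sin_sq φ
  push_cast at h2 ⊢
  linear_combination (-2) * h2

lemma qe_I_mul_zeta (p : ℕ) (hp : p ≠ 0) (j : ℕ) :
    Complex.I * (Complex.exp (2 * Real.pi * Complex.I / p))^j =
      (Real.cos (2 * (Real.pi / 4 + Real.pi * j / p)) : ℂ)
        + (Real.sin (2 * (Real.pi / 4 + Real.pi * j / p)) : ℂ) * Complex.I := by
  rw [qe_zeta_pow p hp]
  have : 2 * (Real.pi / 4 + Real.pi * j / p) = 2 * Real.pi * j / p + Real.pi / 2 := by ring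
  rw [this, Real.cos_add_pi_div_two, Real.sin_add_pi_div_two]
  push_cast
  linear_combination (Complex.sin (2 * Real.pi * j / p)) * Complex.I_sq

lemma qe_arg (p : ℕ) (h1 : p % 4 = 1) (j : ℕ) (hj : j < p) :
    Complex.arg (1 - Complex.I * (Complex.exp (2 * Real.pi * Complex.I / p))^j)
      = Real.pi / p * j - Real.pi / 4 - Real.pi * (if 3 * p < 4 * j then 1 else 0) := by
  have hp0 : p ≠ 0 := by omega
  have hpR : (0:ℝ) < p := by positivity
  have hpi := Real.pi_pos
  rw [qe_I_mul_zeta p hp0]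
  have hx : Real.pi * j / p = Real.pi * (j / p) := by ring
  split_ifs with h
  · have hlt : (3:ℝ) / 4 < j / p := by
      rw [div_lt_div_iff₀ (by norm_num) hpR]
      have : (3 * p : ℝ) < 4 * j := by exact_mod_cast h
      linarith
    have hlt2 : (j:ℝ) / p < 1 := by
      rw [div_lt_one hpR]; exact_mod_cast hj
    have := qe_arg_half (Real.pi / 4 + Real.pi * j / p - Real.pi) (by rw [hx]; nlinarith) (by rw [hx]; nlinarith)
    rw [mul_sub, Real.cos_sub_two_pi, Real.sin_sub_two_pi] at this
    rw [this]; ring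
  · have hlt : (j:ℝ) / p < 3 / 4 := by
      rw [div_lt_div_iff₀ hpR (by norm_num)]
      have : (4 * j : ℝ) < 3 * p := by exact_mod_cast (by omega : 4 * j < 3 * p)
      linarith
    have hlt2 : 0 ≤ (j:ℝ) / p := by positivity
    rw [qe_arg_half (Real.pi / 4 + Real.pi * j / p) (by rw [hx]; nlinarith) (by rw [hx]; nlinarith)]
    ring

lemma qe_slit (z : ℂ) (hz : ‖z‖ = 1) (h : z ≠ 1) : 1 - z ∈ Complex.slitPlane := by
  rw [Complex.mem_slitPlane_iff]
  by_cases him : z.im = 0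
  · left
    have h2 : z.re * z.re + z.im * z.im = 1 := by
      rw [← Complex.normSq_apply, Complex.normSq_eq_norm_sq, hz]; norm_num
    rw [him] at h2
    have h3 : z.re ≠ 1 := fun h4 => h (Complex.ext (by simpa using h4) (by simpa using him))
    have h5 : (z.re - 1) * (z.re + 1) = 0 := by linarith
    rcases mul_eq_zero.1 h5 with h6 | h6
    · exact absurd (by linarith) h3
    · simp; linarith
  · right
    simpa using him

lemma qe_reflect (p : ℕ) [Fact p.Prime] (h1 : p % 4 = 1) (g : ℕ → ℂ) :
    ∑ j ∈ Finset.range p, qeChar p (j : ZMod p) * g j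
      = ∑ j ∈ Finset.range p, qeChar p (j : ZMod p) * g (p - j) := by
  have hp0 : 0 < p := by omega
  obtain ⟨m, rfl⟩ : ∃ m, p = m + 1 := ⟨p - 1, by omega⟩
  rw [Finset.sum_range_succ', Finset.sum_range_succ' (fun j => qeChar (m+1) (j : ZMod (m+1)) * g (m + 1 - j)),
    ← Finset.sum_range_reflect]
  congr 1
  · refine Finset.sum_congr rfl fun j hj => ?_
    have hj' := Finset.mem_range.1 hj
    rw [show m - 1 - j + 1 = m + 1 - (j + 1) by omega]
    congr 1
    rw [Nat.cast_sub (by omega), ZMod.natCast_self, zero_sub, neg_eq_neg_one_mul, map_mul, qeChar_neg_one _ h1, one_mul]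
  · have : qeChar (m+1) ((0:ℕ) : ZMod (m+1)) = 0 := MulChar.map_nonunit _ (by simp)
    rw [this]; simp

lemma qe_sum_zero (p : ℕ) [Fact p.Prime] (h1 : p % 4 = 1) :
    ∑ j ∈ Finset.range p, qeChar p (j : ZMod p) = 0 := by
  rw [← qe_sum_zmod p (fun x => qeChar p x)]
  exact MulChar.sum_eq_zero_of_ne_one (qeChar_ne_one p (by omega))

lemma qe_sum_arg (p : ℕ) [Fact p.Prime] (h1 : p % 4 = 1) :
    ∑ j ∈ Finset.range p, qeChar p (j : ZMod p) *
      (Complex.arg (1 - Complex.I * (Complex.exp (2 * Real.pi * Complex.I / p))^j) : ℂ)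
      = - (Real.pi * ∑ j ∈ Finset.range p, qeChar p (j : ZMod p) * (if 4 * j < p then 1 else 0)) := by
  have hlin : ∑ j ∈ Finset.range p, qeChar p (j : ZMod p) * (j : ℂ) = 0 := by
    have h := qe_reflect p h1 (fun j => (j : ℂ))
    have h2 : ∑ j ∈ Finset.range p, qeChar p (j : ZMod p) * ((p - j : ℕ) : ℂ)
        = (∑ j ∈ Finset.range p, qeChar p (j : ZMod p)) * p - ∑ j ∈ Finset.range p, qeChar p (j : ZMod p) * (j : ℂ) := by
      rw [Finset.sum_mul, ← Finset.sum_sub_distrib]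
      refine Finset.sum_congr rfl fun j hj => ?_
      rw [Nat.cast_sub (Finset.mem_range.1 hj).le]; ring
    rw [h2, qe_sum_zero p h1] at h
    linear_combination h / 2
  have hind : ∑ j ∈ Finset.range p, qeChar p (j : ZMod p) * (if 4 * j < p then 1 else 0)
      = ∑ j ∈ Finset.range p, qeChar p (j : ZMod p) * (if 3 * p < 4 * j then 1 else 0) := by
    rw [qe_reflect p h1 (fun j => if 4 * j < p then 1 else 0)]
    refine Finset.sum_congr rfl fun j hj => ?_
    have := Finset.mem_range.1 hj
    congr 1
    exact if_congr (by omega) rfl rfl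
  rw [hind]
  have h3 : ∀ j ∈ Finset.range p, qeChar p (j : ZMod p) *
      (Complex.arg (1 - Complex.I * (Complex.exp (2 * Real.pi * Complex.I / p))^j) : ℂ)
      = (Real.pi / p : ℂ) * (qeChar p (j : ZMod p) * (j : ℂ)) - (Real.pi / 4 : ℂ) * qeChar p (j : ZMod p)
        - Real.pi * (qeChar p (j : ZMod p) * (if 3 * p < 4 * j then 1 else 0)) := by
    intro j hj
    rw [qe_arg p h1 j (Finset.mem_range.1 hj)]
    split_ifs <;> push_cast <;> ring
  rw [Finset.sum_congr rfl h3, Finset.sum_sub_distrib, Finset.sum_sub_distrib, ← Finset.mul_sum, ← Finset.mul_sum,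
    ← Finset.mul_sum, hlin, qe_sum_zero p h1]
  ring

lemma qe_chi4 (n : ℕ) : Complex.I^n - (-Complex.I)^n = 2 * Complex.I * ((ZMod.χ₄ (n : ZMod 4) : ℤ) : ℂ) := by
  have hI4 : Complex.I^4 = 1 := Complex.I_pow_four
  have hI4' : (-Complex.I)^4 = 1 := by rw [neg_pow, Complex.I_pow_four]; norm_num
  have hn := Nat.div_add_mod n 4
  have hr : (n : ZMod 4) = ((n % 4 : ℕ) : ZMod 4) := by simp
  rw [hr]
  have e1 : Complex.I^n = Complex.I^(n%4) := by
    conv_lhs => rw [← hn, pow_add, pow_mul, hI4, one_pow, one_mul]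
  have e2 : (-Complex.I)^n = (-Complex.I)^(n%4) := by
    conv_lhs => rw [← hn, pow_add, pow_mul, hI4', one_pow, one_mul]
  rw [e1, e2]
  have h4 : n % 4 < 4 := Nat.mod_lt _ (by norm_num)
  have v0 : ZMod.χ₄ ((0:ℕ) : ZMod 4) = 0 := by decide
  have v1 : ZMod.χ₄ ((1:ℕ) : ZMod 4) = 1 := by decide
  have v2 : ZMod.χ₄ ((2:ℕ) : ZMod 4) = 0 := by decide
  have v3 : ZMod.χ₄ ((3:ℕ) : ZMod 4) = -1 := by decide
  generalize n % 4 = r at h4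
  interval_cases r
  · rw [v0]; simp
  · rw [v1]; push_cast; ring
  · rw [v2]; push_cast; ring
  · rw [v3]; push_cast
    linear_combination (2 * Complex.I) * Complex.I_sq

lemma qe_series (p : ℕ) [Fact p.Prime] (h1 : p % 4 = 1) (r : ℝ) (hr0 : 0 ≤ r) (hr1 : r < 1) :
    HasSum (fun n : ℕ => (2 * Complex.I * (Real.sqrt p : ℂ)) *
      ((((ZMod.χ₄ (n : ZMod 4) : ℤ) : ℂ) * qeChar p (n : ZMod p) / n) * (r:ℂ)^n))
    (∑ a : ZMod p, qeChar p a * (-Complex.log (1 - r * (Complex.I * ZMod.stdAddChar a))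
      + Complex.log (1 - r * (-Complex.I * ZMod.stdAddChar a)))) := by
  have key : ∀ a : ZMod p, HasSum (fun n : ℕ => qeChar p a * ((r * (Complex.I * ZMod.stdAddChar a))^n / n
      - (r * (-Complex.I * ZMod.stdAddChar a))^n / n))
      (qeChar p a * (-Complex.log (1 - r * (Complex.I * ZMod.stdAddChar a))
      + Complex.log (1 - r * (-Complex.I * ZMod.stdAddChar a)))) := by
    intro a
    have ha : ‖(ZMod.stdAddChar a : ℂ)‖ = 1 := AddChar.norm_apply _ _
    have n1 : ‖(r:ℂ) * (Complex.I * ZMod.stdAddChar a)‖ < 1 := by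
      rw [norm_mul, norm_mul, ha, Complex.norm_real, Real.norm_eq_abs, abs_of_nonneg hr0]; simpa using hr1
    have n2 : ‖(r:ℂ) * (-Complex.I * ZMod.stdAddChar a)‖ < 1 := by
      rw [norm_mul, norm_mul, ha, Complex.norm_real, Real.norm_eq_abs, abs_of_nonneg hr0]; simpa using hr1
    have := ((Complex.hasSum_taylorSeries_neg_log n1).sub (Complex.hasSum_taylorSeries_neg_log n2)).mul_left (qeChar p a)
    rwa [sub_neg_eq_add] at this
  have h := hasSum_sum (fun a (_ : a ∈ Finset.univ) => key a)
  convert h using 1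
  funext n
  have e : ∀ a : ZMod p, qeChar p a * ((r * (Complex.I * ZMod.stdAddChar a))^n / n
      - (r * (-Complex.I * ZMod.stdAddChar a))^n / n)
      = (r:ℂ)^n / n * (Complex.I^n - (-Complex.I)^n) * (qeChar p a * ZMod.stdAddChar ((n : ZMod p) * a)) := by
    intro a
    have : (ZMod.stdAddChar ((n : ZMod p) * a) : ℂ) = (ZMod.stdAddChar a : ℂ)^n := by
      rw [← nsmul_eq_mul, AddChar.map_nsmul_eq_pow]
    rw [this]
    simp only [mul_pow]
    ring
  simp_rw [e]
  rw [← Finset.mul_sum, qe_gauss_shift p h1, qe_chi4]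
  ring

lemma qe_main (p : ℕ) [Fact p.Prime] (h1 : p % 4 = 1) (L : ℂ)
    (hL : Tendsto (fun n => ∑ k ∈ Finset.range n,
      ((ZMod.χ₄ (k : ZMod 4) : ℤ) : ℂ) * qeChar p (k : ZMod p) / k) atTop (𝓝 L)) :
    (Real.sqrt p : ℂ) * L = Real.pi * ∑ j ∈ Finset.range p, qeChar p (j : ZMod p) * (if 4 * j < p then 1 else 0) := by
  have hI : p = 4 * (p / 4) + 1 := by omega
  have ab := (Complex.tendsto_tsum_powerSeries_nhdsWithin_lt hL).const_mul (2 * Complex.I * (Real.sqrt p : ℂ))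
  rw [tendsto_map'_iff] at ab
  have hord : ∀ a : ZMod p, (ZMod.stdAddChar a : ℂ)^p = 1 := by
    intro a
    rw [← AddChar.map_nsmul_eq_pow]; simp
  have slit1 : ∀ a : ZMod p, 1 - Complex.I * ZMod.stdAddChar a ∈ Complex.slitPlane := by
    intro a
    refine qe_slit _ (by rw [norm_mul, AddChar.norm_apply]; simp) fun h => ?_
    have h2 := congrArg (fun z => z^p) h
    simp only [mul_pow, hord, one_pow, mul_one] at h2
    rw [hI, pow_succ, pow_mul, Complex.I_pow_four, one_pow, one_mul] at h2
    simpa using congrArg Complex.re h2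
  have slit2 : ∀ a : ZMod p, 1 - (-Complex.I) * ZMod.stdAddChar a ∈ Complex.slitPlane := by
    intro a
    refine qe_slit _ (by rw [norm_mul, AddChar.norm_apply]; simp) fun h => ?_
    have h2 := congrArg (fun z => z^p) h
    simp only [mul_pow, hord, one_pow, mul_one] at h2
    rw [hI, pow_succ, pow_mul, show (-Complex.I)^4 = 1 by rw [neg_pow, Complex.I_pow_four]; norm_num, one_pow, one_mul] at h2
    simpa using congrArg Complex.re h2
  have lim2 : Tendsto (fun r : ℝ => ∑ a : ZMod p, qeChar p a * (-Complex.log (1 - r * (Complex.I * ZMod.stdAddChar a))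
      + Complex.log (1 - r * (-Complex.I * ZMod.stdAddChar a)))) (𝓝[<] 1)
      (𝓝 (∑ a : ZMod p, qeChar p a * (-Complex.log (1 - Complex.I * ZMod.stdAddChar a)
      + Complex.log (1 - -Complex.I * ZMod.stdAddChar a)))) := by
    refine tendsto_finsetSum _ fun a _ => Tendsto.const_mul _ ?_
    have aux : ∀ z : ℂ, 1 - z ∈ Complex.slitPlane → Tendsto (fun r : ℝ => Complex.log (1 - r * z)) (𝓝[<] 1) (𝓝 (Complex.log (1 - z))) := by
      intro z hz
      have hc : Continuous (fun r : ℝ => 1 - (r:ℂ) * z) := by fun_prop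
      have ht := (hc.tendsto 1).mono_left (nhdsWithin_le_nhds (s := Set.Iio 1))
      simp only [Complex.ofReal_one, one_mul] at ht
      exact ht.clog hz
    exact (aux _ (slit1 a)).neg.add (aux _ (slit2 a))
  have heq : 2 * Complex.I * (Real.sqrt p : ℂ) * L = ∑ a : ZMod p, qeChar p a * (-Complex.log (1 - Complex.I * ZMod.stdAddChar a)
      + Complex.log (1 - -Complex.I * ZMod.stdAddChar a)) := by
    refine tendsto_nhds_unique (ab.congr' ?_) lim2
    have hmem : Set.Ioo (0:ℝ) 1 ∈ 𝓝[<] (1:ℝ) := Ioo_mem_nhdsLT (by norm_num)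
    filter_upwards [hmem] with r hr
    have := (qe_series p h1 r hr.1.le hr.2).tsum_eq
    rw [tsum_mul_left] at this
    exact this
  have hconj : ∀ a : ZMod p, Complex.log (1 - -Complex.I * ZMod.stdAddChar a)
      = (starRingEnd ℂ) (Complex.log (1 - Complex.I * ZMod.stdAddChar (-a))) := by
    intro a
    rw [← Complex.log_conj _ (Complex.slitPlane_arg_ne_pi (slit1 (-a)))]
    congr 1
    rw [map_sub, map_mul, map_one, Complex.conj_I, AddChar.map_neg_eq_conj, Complex.conj_conj]
  have hre : ∑ a : ZMod p, qeChar p a * Complex.log (1 - -Complex.I * ZMod.stdAddChar a)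
      = ∑ a : ZMod p, qeChar p a * (starRingEnd ℂ) (Complex.log (1 - Complex.I * ZMod.stdAddChar a)) := by
    refine Fintype.sum_equiv (Equiv.neg (ZMod p)) _ _ fun a => ?_
    rw [hconj, Equiv.neg_apply]
    congr 1
    rw [neg_eq_neg_one_mul a, map_mul, qeChar_neg_one _ h1, one_mul]
  have hfin : 2 * Complex.I * (Real.sqrt p : ℂ) * L = -(2 * Complex.I) * ∑ a : ZMod p, qeChar p a *
      (Complex.arg (1 - Complex.I * ZMod.stdAddChar a) : ℂ) := by
    rw [heq]
    simp_rw [mul_add]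
    rw [Finset.sum_add_distrib, hre, ← Finset.sum_add_distrib, Finset.mul_sum]
    refine Finset.sum_congr rfl fun a _ => ?_
    have h7 := Complex.sub_conj (Complex.log (1 - Complex.I * ZMod.stdAddChar a))
    rw [Complex.log_im] at h7
    push_cast at h7
    linear_combination (-qeChar p a) * h7
  rw [qe_sum_zmod p (fun a => qeChar p a * (Complex.arg (1 - Complex.I * ZMod.stdAddChar a) : ℂ))] at hfin
  simp_rw [qe_stdAddChar] at hfin
  rw [qe_sum_arg p h1] at hfin
  have h2I : (2 * Complex.I) ≠ 0 := by simp
  refine mul_left_cancel₀ h2I ?_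
  linear_combination hfin


end QE3

/-- Theorem 7.3: if `p ≡ 1 mod 4` is prime and `χ` is the Dirichlet character of modulus `4p`
with `χ(n) = χ₄(n) χ_p(n)` for all integers `n`, then
`∑_{0<n<p/4} χ_p(n) = (√p/π) L(1, χ)`. -/
theorem quadratic_excess_quarter_eq (p : ℕ) [hp : Fact p.Prime] (h1 : p % 4 = 1)
    (χ : DirichletCharacter ℂ (4 * p))
    (hχ : ∀ n : ℤ, χ ((n : ZMod (4 * p)))
        = ((ZMod.χ₄ ((n : ZMod 4)) : ℤ) : ℂ) * ((legendreSym p n : ℤ) : ℂ)) :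
    (((∑ n ∈ (Finset.range p).filter (fun n : ℕ => 0 < n ∧ (n : ℚ) < (p : ℚ) / 4),
        legendreSym p (n : ℤ) : ℤ)) : ℂ)
      = ((Real.sqrt p / Real.pi : ℝ) : ℂ) *
          @DirichletCharacter.LFunction (4 * p)
            ⟨mul_ne_zero (by norm_num) hp.out.ne_zero⟩ χ 1 := by
  have hne : NeZero (4 * p) := ⟨mul_ne_zero (by norm_num) hp.out.ne_zero⟩
  have hval : ∀ n : ℕ, χ ((n : ℕ) : ZMod (4 * p))
      = ((ZMod.χ₄ (n : ZMod 4) : ℤ) : ℂ) * qeChar p (n : ZMod p) := by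
    intro n
    have := hχ (n : ℤ)
    rw [Int.cast_natCast, Int.cast_natCast] at this
    rw [this, qeChar_natCast]
  have hχ1 : χ ≠ 1 := by
    intro h
    have h2 := hχ (-1)
    have h3 : ZMod.χ₄ (((-1 : ℤ)) : ZMod 4) = -1 := by decide
    have h4 : ((legendreSym p (-1) : ℤ) : ℂ) = 1 := by
      rw [← qeChar_neg_one p h1]
      simp [qeChar, legendreSym]
    rw [h3, h4, h] at h2
    have h5 : (1 : DirichletCharacter ℂ (4 * p)) (((-1 : ℤ)) : ZMod (4 * p)) = 1 :=
      MulChar.one_apply (by simp)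
    rw [h5] at h2
    norm_num at h2
  have hL := qe_L_one χ hχ1
  have hL2 : Filter.Tendsto (fun n => ∑ k ∈ Finset.range n,
      ((ZMod.χ₄ (k : ZMod 4) : ℤ) : ℂ) * qeChar p (k : ZMod p) / k) Filter.atTop
      (nhds (DirichletCharacter.LFunction χ 1)) := by
    rw [← Filter.tendsto_add_atTop_iff_nat 1]
    refine hL.congr fun n => ?_
    rw [Finset.sum_range_succ']
    simp only [Nat.cast_zero, div_zero, add_zero]
    refine Finset.sum_congr rfl fun k _ => ?_
    rw [hval]
    push_cast
    rfl
  have hm := qe_main p h1 _ hL2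
  have hpi : (Real.pi : ℂ) ≠ 0 := by exact_mod_cast Real.pi_ne_zero
  have hS : (((∑ n ∈ (Finset.range p).filter (fun n : ℕ => 0 < n ∧ (n : ℚ) < (p : ℚ) / 4),
        legendreSym p (n : ℤ) : ℤ)) : ℂ) = ∑ j ∈ Finset.range p, qeChar p (j : ZMod p) * (if 4 * j < p then 1 else 0) := by
    push_cast
    rw [Finset.sum_filter]
    refine Finset.sum_congr rfl fun j _ => ?_
    rw [qeChar_natCast]
    have hiff : ((j : ℚ) < (p : ℚ) / 4) ↔ 4 * j < p := by
      rw [lt_div_iff₀ (by norm_num), mul_comm]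
      exact_mod_cast Iff.rfl
    simp only [hiff]
    rcases Nat.eq_zero_or_pos j with rfl | hj
    · simp [legendreSym]
    · simp [hj]
  rw [hS]
  push_cast
  rw [div_mul_eq_mul_div, eq_div_iff hpi]
  linear_combination -hm
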